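/- Let n ≥ k ≥ 1, let r with 1 ≤ r < k, and let ε, ζ ∈ (0,1]. Let μ be a function from the k-element subsets of [n]={1,…,n} to the nonnegative reals, not identically zero. Suppose that for every λ ∈ ℝ^n_{≥0} and every C ⊆ [n] such that the density ν(W) := 1[C⊆W]·μ(W)·∏_{i∈W} λ_i on k-element subsets is not identically zero, the conductance of the k↔(k−r) down-up walk on ν is at least ε. If S is a k-element subset with μ(S) > 0 that is an (r,ζ)-approximate local maximum for μ, then for every k-element subset T of [n] one has μ(T) ≤ (k^r/(ε·ζ))^k · μ(S). -/

import Mathlib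

open Finset

/-- The family of `k`-element subsets of `Fin n` (representing `[n] = {1,…,n}`). -/
def kSets (n k : ℕ) : Finset (Finset (Fin n)) :=
  Finset.univ.powersetCard k

/-- The stationary distribution `π = ν / (Σ_W ν(W))` of the down-up walk on the density `ν`. -/
noncomputable def piDist (n k : ℕ) (ν : Finset (Fin n) → ℝ) (S : Finset (Fin n)) : ℝ :=
  ν S / ∑ W ∈ kSets n k, ν W

/-- The transition probability of the `k ↔ (k-r)` down-up walk on the density `ν`:
`P(S,S') = Σ_{T ⊆ S ∩ S', |T| = k-r} binom(k, k-r)⁻¹ · ν(S') / (Σ_{W ⊇ T, |W| = k} ν(W))`. -/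
noncomputable def transP (n k r : ℕ) (ν : Finset (Fin n) → ℝ) (S S' : Finset (Fin n)) : ℝ :=
  ∑ T ∈ (S ∩ S').powersetCard (k - r),
    ((k.choose (k - r) : ℝ))⁻¹ * ν S' /
      ∑ W ∈ (kSets n k).filter (fun W => T ⊆ W), ν W

/-- "The conductance of the `k ↔ (k-r)` down-up walk on `ν` is at least `ε`": for every
collection `𝒮` of `k`-element subsets with `0 < π(𝒮) ≤ 1/2`, the ergodic flow out of `𝒮`
is at least `ε · π(𝒮)`. -/
def ConductanceGE (n k r : ℕ) (ν : Finset (Fin n) → ℝ) (ε : ℝ) : Prop :=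
  ∀ 𝒮 ⊆ kSets n k,
    0 < ∑ S ∈ 𝒮, piDist n k ν S →
    (∑ S ∈ 𝒮, piDist n k ν S) ≤ 1 / 2 →
    ε * ∑ S ∈ 𝒮, piDist n k ν S ≤
      ∑ S ∈ 𝒮, ∑ S' ∈ kSets n k \ 𝒮, piDist n k ν S * transP n k r ν S S'

/-!
Fix `T` and apply the external field that is `1` on `S`, `t = εζ / k ^ r` on `T \ S` and `0`
elsewhere; the tilted density `ν` has `ν(S) = μ(S)` and `ν(T) = t ^ |T \ S| μ(T)`. A step of the
down-up walk from `S` first drops to a `(k - r)`-set `A ⊆ S`. At most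
`binom(k + r, r) - 1 ≤ k ^ r` sets other than `S` lie between `A` and `S ∪ T`, each is an
`r`-neighbour of `S`, and so each has `ν`-mass at most `t · μ(S) / ζ`, for a total of at most
`ε ν(S)`. Hence the walk leaves `S` with probability less than `ε`, which the conductance of `{S}`
forbids unless `π(S) > 1/2`. But then `ν(T) < ν(S)`, which is the claim.
-/

section Counting

lemma choose_add_le_pow_add_one {k : ℕ} (hk : 3 ≤ k) (r : ℕ) :
    (k + r).choose r ≤ k ^ r + 1 := by
  induction r with
  | zero => simp
  | succ m ih =>
    rcases m.eq_zero_or_pos with rfl | hm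
    · simp
    have hkm : k ≤ k ^ m := Nat.le_self_pow hm.ne' k
    have hmk : m + 2 ≤ m * k := by nlinarith
    refine Nat.le_of_mul_le_mul_right ?_ m.succ_pos
    calc (k + (m + 1)).choose (m + 1) * (m + 1)
        = (k + m + 1) * (k + m).choose m := (Nat.add_one_mul_choose_eq (k + m) m).symm
      _ ≤ (k + m + 1) * (k ^ m + 1) := Nat.mul_le_mul_left _ ih
      _ = k * k ^ m + ((m + 1) * k ^ m + k) + (m + 1) := by ring
      _ ≤ k * k ^ m + (m + 2) * k ^ m + (m + 1) := by linarith
      _ ≤ k * k ^ m + m * k * k ^ m + (m + 1) := by gcongr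
      _ = (k ^ (m + 1) + 1) * (m + 1) := by ring

lemma choose_add_le_pow_add_one_of_lt {k r : ℕ} (hrk : r < k) :
    (k + r).choose r ≤ k ^ r + 1 := by
  rcases le_or_gt 3 k with hk | hk
  · exact choose_add_le_pow_add_one hk r
  · obtain rfl | rfl : r = 0 ∨ r = 1 := by omega
    all_goals simp

variable {α : Type*} [DecidableEq α]

lemma card_filter_superset_erase_le_pow {k r : ℕ} (hrk : r < k) {S T A : Finset α}
    (hS : #S = k) (hT : #T = k) (hAS : A ⊆ S) (hA : #A = k - r) :
    #{W ∈ ((S ∪ T).powersetCard k).erase S | A ⊆ W} ≤ k ^ r := by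
  have hSmem : S ∈ {W ∈ (S ∪ T).powersetCard k | A ⊆ W} := by simp [hS, hAS]
  have hcard : #(S ∪ T) - #A ≤ k + r := by
    have := card_union_le S T
    omega
  calc #{W ∈ ((S ∪ T).powersetCard k).erase S | A ⊆ W}
      = (#(S ∪ T) - #A).choose (k - #A) - 1 := by
        rw [filter_erase, card_erase_of_mem hSmem, card_filter_powersetCard_subset A _ k
          (hAS.trans subset_union_left) (by omega)]
    _ = (#(S ∪ T) - #A).choose r - 1 := by rw [hA, Nat.sub_sub_self hrk.le]
    _ ≤ (k + r).choose r - 1 := Nat.sub_le_sub_right (Nat.choose_le_choose r hcard) 1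
    _ ≤ k ^ r := Nat.sub_le_of_le_add (choose_add_le_pow_add_one_of_lt hrk)

end Counting

section DownUpWalk

/-- The `ν`-mass of the sets in the family `𝒯` that contain `A`. For `𝒯 = kSets n k` this is the
denominator in `transP`. -/
def massAbove {α : Type*} [DecidableEq α] (𝒯 : Finset (Finset α)) (ν : Finset α → ℝ)
    (A : Finset α) : ℝ :=
  ∑ W ∈ 𝒯 with A ⊆ W, ν W

lemma massAbove_eq_add_erase {α : Type*} [DecidableEq α] {𝒯 : Finset (Finset α)}
    (ν : Finset α → ℝ) {S A : Finset α} (hS : S ∈ 𝒯) (hAS : A ⊆ S) :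
    massAbove 𝒯 ν A = ν S + massAbove (𝒯.erase S) ν A := by
  rw [massAbove, massAbove, filter_erase, add_sum_erase _ _ (mem_filter.2 ⟨hS, hAS⟩)]

variable {n k r : ℕ} {ν : Finset (Fin n) → ℝ} {ε : ℝ} {S T : Finset (Fin n)}

lemma mem_kSets : S ∈ kSets n k ↔ #S = k :=
  mem_powersetCard_univ

lemma sum_transP_eq_sum_massAbove_div (𝒯 : Finset (Finset (Fin n))) :
    ∑ S' ∈ 𝒯, transP n k r ν S S' = ∑ A ∈ S.powersetCard (k - r),
      (k.choose (k - r) : ℝ)⁻¹ * (massAbove 𝒯 ν A / massAbove (kSets n k) ν A) := by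
  unfold transP
  rw [sum_comm' (s' := fun A ↦ {W ∈ 𝒯 | A ⊆ W}) (t' := S.powersetCard (k - r))]
  · simp only [massAbove, sum_div, mul_sum, mul_div_assoc]
  · simp only [mem_powersetCard, mem_filter, subset_inter_iff]
    tauto

lemma sum_transP_erase_lt (hε : 0 < ε) (hν : ∀ W ∈ kSets n k, 0 ≤ ν W) (hS : S ∈ kSets n k)
    (hSpos : 0 < ν S)
    (hmass : ∀ A ∈ S.powersetCard (k - r), massAbove ((kSets n k).erase S) ν A ≤ ε * ν S) :
    ∑ S' ∈ (kSets n k).erase S, transP n k r ν S S' < ε := by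
  have hchoose : 0 < (k.choose (k - r) : ℝ) := mod_cast Nat.choose_pos (Nat.sub_le k r)
  have hratio : ∀ A ∈ S.powersetCard (k - r),
      massAbove ((kSets n k).erase S) ν A / massAbove (kSets n k) ν A < ε := by
    intro A hA
    have hnonneg : 0 ≤ massAbove ((kSets n k).erase S) ν A :=
      sum_nonneg fun W hW ↦ hν W (mem_of_mem_erase (mem_filter.1 hW).1)
    rw [massAbove_eq_add_erase ν hS (mem_powersetCard.1 hA).1, div_lt_iff₀ (by positivity)]
    rcases hnonneg.eq_or_lt with hzero | hpos
    · rw [← hzero]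
      positivity
    · linarith [hmass A hA, mul_pos hε hpos]
  calc ∑ S' ∈ (kSets n k).erase S, transP n k r ν S S'
      = ∑ A ∈ S.powersetCard (k - r), (k.choose (k - r) : ℝ)⁻¹ *
          (massAbove ((kSets n k).erase S) ν A / massAbove (kSets n k) ν A) :=
        sum_transP_eq_sum_massAbove_div _
    _ < ∑ _A ∈ S.powersetCard (k - r), (k.choose (k - r) : ℝ)⁻¹ * ε := by
        refine sum_lt_sum_of_nonempty ?_ fun A hA ↦
          mul_lt_mul_of_pos_left (hratio A hA) (inv_pos.2 hchoose)
        rw [powersetCard_nonempty, mem_kSets.1 hS]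
        exact Nat.sub_le k r
    _ = ε := by
        rw [sum_const, card_powersetCard, mem_kSets.1 hS, nsmul_eq_mul,
          mul_inv_cancel_left₀ hchoose.ne']

lemma ConductanceGE.half_lt_piDist (hcond : ConductanceGE n k r ν ε) (hS : S ∈ kSets n k)
    (hpos : 0 < piDist n k ν S)
    (hescape : ∑ S' ∈ (kSets n k).erase S, transP n k r ν S S' < ε) :
    1 / 2 < piDist n k ν S := by
  by_contra! hhalf
  have hflow := hcond {S} (singleton_subset_iff.2 hS) (by rwa [sum_singleton])
    (by rwa [sum_singleton])
  rw [sum_singleton, sum_singleton, sdiff_singleton_eq_erase, ← mul_sum, mul_comm] at hflow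
  exact hescape.not_ge (le_of_mul_le_mul_left hflow hpos)

lemma lt_of_half_lt_piDist (hν : ∀ W ∈ kSets n k, 0 ≤ ν W) (hS : S ∈ kSets n k)
    (hT : T ∈ kSets n k) (hST : S ≠ T) (hSpos : 0 < ν S) (hhalf : 1 / 2 < piDist n k ν S) :
    ν T < ν S := by
  have htotal : ν S + ν T ≤ ∑ W ∈ kSets n k, ν W := by
    rw [← sum_pair hST]
    exact sum_le_sum_of_subset_of_nonneg (insert_subset hS (singleton_subset_iff.2 hT))
      fun W hW _ ↦ hν W hW
  have hTnonneg := hν T hT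
  rw [piDist, lt_div_iff₀ (by linarith)] at hhalf
  linarith

lemma ConductanceGE.lt_of_massAbove_le (hcond : ConductanceGE n k r ν ε) (hε : 0 < ε)
    (hν : ∀ W ∈ kSets n k, 0 ≤ ν W) (hS : S ∈ kSets n k) (hT : T ∈ kSets n k) (hST : S ≠ T)
    (hSpos : 0 < ν S)
    (hmass : ∀ A ∈ S.powersetCard (k - r), massAbove ((kSets n k).erase S) ν A ≤ ε * ν S) :
    ν T < ν S := by
  have hpos : 0 < piDist n k ν S := div_pos hSpos (sum_pos' hν ⟨S, hS, hSpos⟩)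
  exact lt_of_half_lt_piDist hν hS hT hST hSpos
    (hcond.half_lt_piDist hS hpos (sum_transP_erase_lt hε hν hS hSpos hmass))

end DownUpWalk

section ExternalField

variable {α : Type*} [DecidableEq α] {S T W : Finset α} {t : ℝ}

/-- The density `μ` under the external field `lam`, written `λ ∗ μ` on paper. It is not
normalized. -/
def tilt {α : Type*} (μ : Finset α → ℝ) (lam : α → ℝ) : Finset α → ℝ :=
  fun W ↦ μ W * ∏ i ∈ W, lam i

/-- The external field that restricts a density to subsets of `S ∪ T` and penalizes each element
outside `S` by the factor `t`. -/
def localizingField (S T : Finset α) (t : ℝ) : α → ℝ :=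
  fun i ↦ if i ∈ S then 1 else if i ∈ T then t else 0

lemma localizingField_nonneg (ht : 0 ≤ t) (i : α) : 0 ≤ localizingField S T t i := by
  unfold localizingField
  split_ifs <;> positivity

lemma tilt_localizingField_of_subset (μ : Finset α → ℝ) (hW : W ⊆ S ∪ T) :
    tilt μ (localizingField S T t) W = μ W * t ^ #(W \ S) := by
  have hfield : ∀ i ∈ W, localizingField S T t i = if i ∈ S then 1 else t := by
    intro i hi
    have := mem_union.1 (hW hi)
    unfold localizingField
    grind
  rw [tilt, prod_congr rfl hfield, prod_ite, prod_const_one, one_mul, prod_const,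
    filter_notMem_eq_sdiff]

lemma tilt_localizingField_self (μ : Finset α → ℝ) :
    tilt μ (localizingField S T t) S = μ S := by
  rw [tilt_localizingField_of_subset μ subset_union_left, sdiff_self, bot_eq_empty, card_empty,
    pow_zero, mul_one]

lemma tilt_localizingField_of_not_subset (μ : Finset α → ℝ) (hW : ¬W ⊆ S ∪ T) :
    tilt μ (localizingField S T t) W = 0 := by
  obtain ⟨i, hiW, hi⟩ := not_subset.1 hW
  rw [mem_union, not_or] at hi
  rw [tilt, prod_eq_zero hiW (by simp [localizingField, hi]), mul_zero]

lemma tilt_localizingField_le (ht0 : 0 ≤ t) (ht1 : t ≤ 1) {μ : Finset α → ℝ} {M : ℝ} (hM : 0 ≤ M)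
    (hμW : μ W ≤ M) (hW : W ⊆ S ∪ T) (hWS : ¬W ⊆ S) :
    tilt μ (localizingField S T t) W ≤ M * t := by
  rw [tilt_localizingField_of_subset μ hW]
  have hne : #(W \ S) ≠ 0 := by rwa [Ne, card_eq_zero, sdiff_eq_empty_iff_subset]
  exact mul_le_mul hμW (pow_le_of_le_one ht0 ht1 hne) (by positivity) hM

lemma massAbove_erase_tilt_localizingField_le {n k r : ℕ} (hrk : r < k)
    {μ : Finset (Fin n) → ℝ} {S T A : Finset (Fin n)} (hS : #S = k) (hT : #T = k)
    (hA : A ∈ S.powersetCard (k - r)) (ht0 : 0 ≤ t) (ht1 : t ≤ 1) {M : ℝ} (hM : 0 ≤ M)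
    (hμ : ∀ W, #W = k → #(S \ W) ≤ r → μ W ≤ M) :
    massAbove ((kSets n k).erase S) (tilt μ (localizingField S T t)) A ≤ k ^ r * (M * t) := by
  obtain ⟨hAS, hAcard⟩ := mem_powersetCard.1 hA
  have hterm : ∀ W ∈ ((S ∪ T).powersetCard k).erase S, A ⊆ W →
      tilt μ (localizingField S T t) W ≤ M * t := by
    intro W hW hAW
    obtain ⟨hne, hWST, hWcard⟩ : W ≠ S ∧ W ⊆ S ∪ T ∧ #W = k := by simpa using hW
    have hdist : #(S \ W) ≤ r := calc
      #(S \ W) ≤ #(S \ A) := card_le_card (sdiff_subset_sdiff subset_rfl hAW)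
      _ = r := by rw [card_sdiff_of_subset hAS]; omega
    exact tilt_localizingField_le ht0 ht1 hM (hμ W hWcard hdist) hWST
      fun hWS ↦ hne (eq_of_subset_of_card_le hWS (hS.trans hWcard.symm).le)
  calc massAbove ((kSets n k).erase S) (tilt μ (localizingField S T t)) A
      = massAbove (((S ∪ T).powersetCard k).erase S) (tilt μ (localizingField S T t)) A := by
        have hsub := erase_subset_erase S (powersetCard_mono (n := k) (subset_univ (S ∪ T)))
        refine (sum_subset (filter_subset_filter _ hsub) fun W hW hW' ↦
          tilt_localizingField_of_not_subset μ fun hWST ↦ ?_).symm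
        simp_all
    _ ≤ #{W ∈ ((S ∪ T).powersetCard k).erase S | A ⊆ W} • (M * t) :=
        sum_le_card_nsmul _ _ _ fun W hW ↦ hterm W (mem_filter.1 hW).1 (mem_filter.1 hW).2
    _ ≤ k ^ r * (M * t) := by
        rw [nsmul_eq_mul]
        gcongr
        exact_mod_cast card_filter_superset_erase_le_pow hrk hS hT hAS hAcard

end ExternalField

lemma one_le_pow_div_mul {k : ℕ} (hk : 1 ≤ k) (r : ℕ) {ε ζ : ℝ} (hε : 0 < ε) (hε1 : ε ≤ 1)
    (hζ : 0 < ζ) (hζ1 : ζ ≤ 1) : 1 ≤ (k : ℝ) ^ r / (ε * ζ) := by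
  rw [one_le_div (mul_pos hε hζ)]
  exact (mul_le_one₀ hε1 hζ.le hζ1).trans (one_le_pow₀ (mod_cast hk))

theorem fast_mixing_implies_local_search_guarantee_general {n k r : ℕ} {ε ζ : ℝ}
    (hrk : r < k) (hε : 0 < ε) (hε1 : ε ≤ 1) (hζ : 0 < ζ) (hζ1 : ζ ≤ 1)
    {μ : Finset (Fin n) → ℝ} (hμ : ∀ W, #W = k → 0 ≤ μ W)
    (hcond : ∀ lam : Fin n → ℝ, (∀ i, 0 ≤ lam i) → (∃ W, #W = k ∧ tilt μ lam W ≠ 0) →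
      ConductanceGE n k r (tilt μ lam) ε)
    {S : Finset (Fin n)} (hS : #S = k) (hSpos : 0 < μ S)
    (hloc : ∀ W, #W = k → #(S \ W) ≤ r → ζ * μ W ≤ μ S) {T : Finset (Fin n)} (hT : #T = k) :
    μ T ≤ ((k : ℝ) ^ r / (ε * ζ)) ^ #(T \ S) * μ S := by
  rcases eq_or_ne S T with rfl | hST
  · simp
  have hR : 1 ≤ (k : ℝ) ^ r / (ε * ζ) := one_le_pow_div_mul (by omega) r hε hε1 hζ hζ1
  set t : ℝ := ((k : ℝ) ^ r / (ε * ζ))⁻¹ with ht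
  have ht0 : 0 < t := inv_pos.2 (one_pos.trans_le hR)
  set ν := tilt μ (localizingField S T t) with hνdef
  have hfield := localizingField_nonneg (S := S) (T := T) ht0.le
  have hν : ∀ W ∈ kSets n k, 0 ≤ ν W := fun W hW ↦
    mul_nonneg (hμ W (mem_kSets.1 hW)) (prod_nonneg fun i _ ↦ hfield i)
  have hνS : ν S = μ S := tilt_localizingField_self μ
  have hmass : ∀ A ∈ S.powersetCard (k - r),
      massAbove ((kSets n k).erase S) ν A ≤ ε * ν S := fun A hA ↦ calc
    _ ≤ (k : ℝ) ^ r * (μ S / ζ * t) :=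
      massAbove_erase_tilt_localizingField_le hrk hS hT hA ht0.le (inv_le_one_of_one_le₀ hR)
        (by positivity) fun W hW hSW ↦ (le_div_iff₀' hζ).2 (hloc W hW hSW)
    _ = ε * ν S := by
      have hk : (k : ℝ) ≠ 0 := by norm_cast; omega
      rw [hνS, ht]
      field_simp
  have hνpos : 0 < ν S := hνS ▸ hSpos
  have hlt : ν T < ν S := (hcond _ hfield ⟨S, hS, hνpos.ne'⟩).lt_of_massAbove_le hε hν
    (mem_kSets.2 hS) (mem_kSets.2 hT) hST hνpos hmass
  rw [hνS, hνdef, tilt_localizingField_of_subset μ subset_union_right, ht, inv_pow,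
    ← div_eq_mul_inv] at hlt
  exact ((div_lt_iff₀' (by positivity)).1 hlt).le

/-- If all down-up walks on conditioned external-field tilts of `μ` have conductance at least
`ε`, then any `(r,ζ)`-approximate local maximum `S` of `μ` is a `(k^r/(ε·ζ))^k`-approximate
global maximum. -/
theorem fast_mixing_implies_local_search_guarantee
    (n k r : ℕ) (ε ζ : ℝ)
    (hk : 1 ≤ k) (hkn : k ≤ n) (hr : 1 ≤ r) (hrk : r < k)
    (hε : 0 < ε) (hε1 : ε ≤ 1) (hζ : 0 < ζ) (hζ1 : ζ ≤ 1)
    (μ : Finset (Fin n) → ℝ)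
    (hμnonneg : ∀ S : Finset (Fin n), S.card = k → 0 ≤ μ S)
    (hμnontriv : ∃ S : Finset (Fin n), S.card = k ∧ μ S ≠ 0)
    (hcond : ∀ lam : Fin n → ℝ, (∀ i, 0 ≤ lam i) → ∀ C : Finset (Fin n),
      (∃ W : Finset (Fin n), W.card = k ∧
        (if C ⊆ W then μ W * ∏ i ∈ W, lam i else 0) ≠ 0) →
      ConductanceGE n k r (fun W => if C ⊆ W then μ W * ∏ i ∈ W, lam i else 0) ε)
    (S : Finset (Fin n)) (hS : S.card = k) (hSpos : 0 < μ S)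
    (hloc : ∀ T : Finset (Fin n), T.card = k → (S \ T).card ≤ r → ζ * μ T ≤ μ S) :
    ∀ T : Finset (Fin n), T.card = k →
      μ T ≤ ((k : ℝ) ^ r / (ε * ζ)) ^ k * μ S := by
  refine fun T hT ↦ (fast_mixing_implies_local_search_guarantee_general hrk hε hε1 hζ hζ1 hμnonneg
    (fun lam hlam ↦ by unfold tilt; simpa only [empty_subset, if_true] using hcond lam hlam ∅)
    hS hSpos hloc hT).trans ?_
  gcongr
  exacts [one_le_pow_div_mul hk r hε hε1 hζ hζ1, (card_le_card sdiff_subset).trans_eq hT]
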